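/- Duality of interval decompositions of zigzag modules. Let k be a field, n ≥ 1, d a zigzag shape of length n, and V a zigzag module of shape d. Let V* denote the dual zigzag module of the reversed shape (all directions of d reversed): its i-th space is the dual space Hom_k(V_i, k) and its structure maps are the transposes of the structure maps of V. Suppose there is a family of k-vector spaces M_{p,q}, indexed by pairs 1 ≤ p ≤ q ≤ n, and an isomorphism of zigzag modules V ≅ ⊕_{1 ≤ p ≤ q ≤ n} M_{p,q} ⊗_k I[p,q], where M ⊗_k I[p,q] denotes the zigzag module whose i-th space is M ⊗_k (I[p,q])_i with the induced maps. Then there is an isomorphism of zigzag modules V* ≅ ⊕_{1 ≤ p ≤ q ≤ n} Hom_k(M_{p,q}, k) ⊗_k I'[p,q], where I'[p,q] is the interval module of the reversed shape supported on the same interval [p,q]. -/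

import Mathlib

/-!
Zigzag modules indexed by the natural numbers (0-based).  A zigzag module of
length `n` in the sense of the paper (spaces `V_1, …, V_n`, 1-based) is encoded
with spaces indexed by `0, …, n-1`; a shape `d : ℕ → Bool` records, for each
`i`, whether the structure map between positions `i` and `i+1` points forward
(`true`) or backward (`false`).
-/

/-- A zigzag module of shape `d` over the field `k`. -/
structure ZigzagModule (k : Type) [Field k] (d : ℕ → Bool) where
  V : ℕ → Type
  [acg : ∀ i, AddCommGroup (V i)]
  [mod : ∀ i, Module k (V i)]
  fwd : ∀ i, d i = true → (V i →ₗ[k] V (i + 1))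
  bwd : ∀ i, d i = false → (V (i + 1) →ₗ[k] V i)

attribute [instance] ZigzagModule.acg ZigzagModule.mod

/-- An isomorphism of zigzag modules of the same shape: a family of linear
equivalences commuting with all structure maps. -/
structure ZigzagIso {k : Type} [Field k] {d : ℕ → Bool}
    (M N : ZigzagModule k d) where
  e : ∀ i, M.V i ≃ₗ[k] N.V i
  comm_fwd : ∀ i (h : d i = true) (x : M.V i),
    e (i + 1) (M.fwd i h x) = N.fwd i h (e i x)
  comm_bwd : ∀ i (h : d i = false) (x : M.V (i + 1)),
    e i (M.bwd i h x) = N.bwd i h (e (i + 1) x)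

/-- The `i`-th space of the interval module `I[p,q]`, realized as the submodule
`⊤` of `k` (a copy of `k`) when `p ≤ i ≤ q` and the submodule `⊥` (the zero
space) otherwise. -/
def intervalSpace (k : Type) [Field k] (p q i : ℕ) : Submodule k k :=
  if p ≤ i ∧ i ≤ q then ⊤ else ⊥

open Classical in
/-- The structure map of an interval module: the identity (inclusion) if both
endpoints lie in the interval, the zero map otherwise. -/
noncomputable def intervalMap (k : Type) [Field k] (p q i j : ℕ) :
    (intervalSpace k p q i) →ₗ[k] (intervalSpace k p q j) :=
  if h : intervalSpace k p q i ≤ intervalSpace k p q j then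
    Submodule.inclusion h
  else 0

/-- The interval module `I[p,q]` of shape `d`: a copy of `k` at each index
`p ≤ i ≤ q`, the zero space elsewhere; identity maps between consecutive copies
of `k`, zero maps elsewhere. -/
noncomputable def intervalModule (k : Type) [Field k] (d : ℕ → Bool)
    (p q : ℕ) : ZigzagModule k d where
  V i := intervalSpace k p q i
  fwd i _ := intervalMap k p q i (i + 1)
  bwd i _ := intervalMap k p q (i + 1) i

/-- Pointwise direct sum of a family of zigzag modules of the same shape. -/
noncomputable def dsumModule (k : Type) [Field k] (d : ℕ → Bool)
    (I : Type) [DecidableEq I] (F : I → ZigzagModule k d) :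
    ZigzagModule k d where
  V i := DirectSum I fun j => (F j).V i
  fwd i h := DirectSum.toModule k I _ fun j =>
    (DirectSum.lof k I (fun j => (F j).V (i + 1)) j).comp ((F j).fwd i h)
  bwd i h := DirectSum.toModule k I _ fun j =>
    (DirectSum.lof k I (fun j => (F j).V i) j).comp ((F j).bwd i h)


/-- The zigzag module `M ⊗ₖ V` obtained by tensoring each space of `V` with a
fixed vector space `M`, with the induced structure maps. -/
noncomputable def tensorModule {k : Type} [Field k] {d : ℕ → Bool}
    (M : Type) [AddCommGroup M] [Module k M] (V : ZigzagModule k d) :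
    ZigzagModule k d where
  V i := TensorProduct k M (V.V i)
  fwd i h := LinearMap.lTensor M (V.fwd i h)
  bwd i h := LinearMap.lTensor M (V.bwd i h)

/-- The dual zigzag module `V*` of the reversed shape: its `i`-th space is the
dual space `Hom_k(V_i, k)` and its structure maps are the transposes of the
structure maps of `V`. -/
noncomputable def dualModule {k : Type} [Field k] {d : ℕ → Bool}
    (V : ZigzagModule k d) : ZigzagModule k (fun i => !(d i)) where
  V i := Module.Dual k (V.V i)
  fwd i h := (V.bwd i (by simpa using h)).dualMap
  bwd i h := (V.fwd i (by simpa using h)).dualMap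

/-!
Duality commutes with each of the three constructions in the decomposition. The dual of a finite
direct sum is the direct sum of the duals. The canonical map `M* ⊗ N* → (M ⊗ N)*` is bijective as
soon as `N` is finite dimensional, whatever the size of the coefficient space `M`. Finally, each
space of `I[p,q]` is a subspace of `k`, so multiplication in `k` restricts to a perfect pairing on
it; the maps `I_i → I_j` and `I_j → I_i` are adjoint for these pairings, which identifies the dual
of `I[p,q]` with the interval module of the reversed shape.
-/

open scoped TensorProduct

section LinearAlgebra

variable {R M N P : Type*} [CommSemiring R] [AddCommMonoid M] [Module R M]
  [AddCommMonoid N] [Module R N] [AddCommMonoid P] [Module R P]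

theorem lTensor_apply_lTensor_of_comp_eq {P' Q : Type*} [AddCommMonoid P'] [Module R P']
    [AddCommMonoid Q] [Module R Q] {f : N →ₗ[R] P} {g : P →ₗ[R] Q} {f' : N →ₗ[R] P'}
    {g' : P' →ₗ[R] Q} (h : g ∘ₗ f = g' ∘ₗ f') (x : M ⊗[R] N) :
    g.lTensor M (f.lTensor M x) = g'.lTensor M (f'.lTensor M x) := by
  rw [← LinearMap.lTensor_comp_apply, h, LinearMap.lTensor_comp_apply]

variable (R M N) in
theorem dualDistrib_bijective [Module.Finite R N] [Module.Projective R N] :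
    Function.Bijective (TensorProduct.dualDistrib R M N) := by
  let e : Module.Dual R M ⊗[R] Module.Dual R N ≃ₗ[R] Module.Dual R (M ⊗[R] N) :=
    TensorProduct.comm R _ _ ≪≫ₗ dualTensorHomEquiv R N (Module.Dual R M) ≪≫ₗ
      LinearMap.lflip ≪≫ₗ TensorProduct.lift.equiv (.id R) M N R
  have he : e.toLinearMap = TensorProduct.dualDistrib R M N := by
    ext f g m n
    simp [e, mul_comm]
  exact he ▸ e.bijective

theorem dualDistrib_lTensor_dualMap (f : N →ₗ[R] P)
    (x : Module.Dual R M ⊗[R] Module.Dual R P) :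
    TensorProduct.dualDistrib R M N (f.dualMap.lTensor _ x) =
      (f.lTensor M).dualMap (TensorProduct.dualDistrib R M P x) := by
  suffices h : TensorProduct.dualDistrib R M N ∘ₗ f.dualMap.lTensor _ =
      (f.lTensor M).dualMap ∘ₗ TensorProduct.dualDistrib R M P from LinearMap.congr_fun h x
  ext
  simp

variable {I : Type*} [DecidableEq I] {A B : I → Type*}
  [∀ j, AddCommMonoid (A j)] [∀ j, Module R (A j)] [∀ j, AddCommMonoid (B j)] [∀ j, Module R (B j)]

theorem toModule_lof_comp_eq_lmap (f : ∀ j, A j →ₗ[R] B j) :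
    (DirectSum.toModule R I (DirectSum I B) fun j => DirectSum.lof R I B j ∘ₗ f j) =
      DirectSum.lmap f := by
  ext
  simp

variable (A) in
/-- The dual of a finite direct sum as the direct sum of the duals; the component at `j` of a
functional is its restriction to the `j`-th summand. -/
def dualDirectSumEquiv [Fintype I] :
    Module.Dual R (DirectSum I A) ≃ₗ[R] DirectSum I fun j => Module.Dual R (A j) :=
  (DFinsupp.lsum R).symm ≪≫ₗ
    (DirectSum.linearEquivFunOnFintype R I fun j => Module.Dual R (A j)).symm

theorem dualDirectSumEquiv_apply [Fintype I] (φ : Module.Dual R (DirectSum I A)) (j : I) :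
    dualDirectSumEquiv A φ j = φ ∘ₗ DirectSum.lof R I A j :=
  rfl

theorem dualDirectSumEquiv_dualMap_lmap [Fintype I] (f : ∀ j, A j →ₗ[R] B j)
    (φ : Module.Dual R (DirectSum I B)) :
    dualDirectSumEquiv A ((DirectSum.lmap f).dualMap φ) =
      DirectSum.lmap (fun j => (f j).dualMap) (dualDirectSumEquiv B φ) := by
  ext j x
  simp [dualDirectSumEquiv_apply]

/-- Multiplication in a field, as a pairing of a subspace with itself. -/
def subspaceMulPairing {k : Type*} [Field k] (S : Submodule k k) : S →ₗ[k] Module.Dual k S :=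
  (LinearMap.mul k k).domRestrict₁₂ S S

theorem subspaceMulPairing_injective {k : Type*} [Field k] (S : Submodule k k) :
    Function.Injective (subspaceMulPairing S) := by
  rw [injective_iff_map_eq_zero]
  intro s hs
  have hsq : (s : k) * s = 0 := LinearMap.congr_fun hs s
  exact Subtype.ext (mul_self_eq_zero.mp hsq)

/-- The self-duality of a subspace of the field given by multiplication. -/
noncomputable def subspaceSelfDual {k : Type*} [Field k] (S : Submodule k k) :
    S ≃ₗ[k] Module.Dual k S :=
  (subspaceMulPairing S).linearEquivOfInjective (subspaceMulPairing_injective S)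
    Subspace.dual_finrank_eq.symm

theorem subspaceSelfDual_apply {k : Type*} [Field k] (S : Submodule k k) (s t : S) :
    subspaceSelfDual S s t = (s : k) * t :=
  rfl

end LinearAlgebra

section IntervalModule

variable {k : Type} [Field k] {p q i j : ℕ}

theorem coe_eq_zero_of_notMem_interval (hi : ¬(p ≤ i ∧ i ≤ q)) (s : intervalSpace k p q i) :
    (s : k) = 0 := by
  simpa only [intervalSpace, if_neg hi, Submodule.mem_bot] using s.2

theorem coe_intervalMap (s : intervalSpace k p q i) :
    (intervalMap k p q i j s : k) = if p ≤ j ∧ j ≤ q then (s : k) else 0 := by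
  split_ifs with hj
  · have hle : intervalSpace k p q i ≤ intervalSpace k p q j := by
      simp only [intervalSpace, if_pos hj, le_top]
    rw [intervalMap, dif_pos hle, Submodule.coe_inclusion]
  · exact coe_eq_zero_of_notMem_interval hj _

theorem intervalMap_adjoint (s : intervalSpace k p q i) (t : intervalSpace k p q j) :
    (intervalMap k p q i j s : k) * t = s * intervalMap k p q j i t := by
  rw [coe_intervalMap, coe_intervalMap]
  split_ifs with hj hi hi
  · rfl
  · simp [coe_eq_zero_of_notMem_interval hi s]
  · simp [coe_eq_zero_of_notMem_interval hj t]
  · simp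

theorem subspaceSelfDual_intervalMap (s : intervalSpace k p q i) :
    subspaceSelfDual _ (intervalMap k p q i j s) =
      (intervalMap k p q j i).dualMap (subspaceSelfDual _ s) := by
  ext t
  simp only [LinearMap.dualMap_apply, subspaceSelfDual_apply, intervalMap_adjoint]

end IntervalModule

section Dsum

variable {k : Type} [Field k] {d : ℕ → Bool} {I : Type} [DecidableEq I]
  (F : I → ZigzagModule k d)

theorem dsumModule_fwd (i : ℕ) (h : d i = true) :
    (dsumModule k d I F).fwd i h = DirectSum.lmap fun j => (F j).fwd i h :=
  toModule_lof_comp_eq_lmap _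

theorem dsumModule_bwd (i : ℕ) (h : d i = false) :
    (dsumModule k d I F).bwd i h = DirectSum.lmap fun j => (F j).bwd i h :=
  toModule_lof_comp_eq_lmap _

end Dsum

namespace ZigzagIso

variable {k : Type} [Field k] {d : ℕ → Bool} {U V W : ZigzagModule k d}

/-- The inverse of an isomorphism of zigzag modules. -/
def symm (f : ZigzagIso V W) : ZigzagIso W V where
  e i := (f.e i).symm
  comm_fwd i h x := by
    rw [LinearEquiv.symm_apply_eq, f.comm_fwd, LinearEquiv.apply_symm_apply]
  comm_bwd i h x := by
    rw [LinearEquiv.symm_apply_eq, f.comm_bwd, LinearEquiv.apply_symm_apply]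

/-- The composite of two isomorphisms of zigzag modules. -/
def trans (f : ZigzagIso U V) (g : ZigzagIso V W) : ZigzagIso U W where
  e i := f.e i ≪≫ₗ g.e i
  comm_fwd i h x := by simp only [LinearEquiv.trans_apply, f.comm_fwd, g.comm_fwd]
  comm_bwd i h x := by simp only [LinearEquiv.trans_apply, f.comm_bwd, g.comm_bwd]

/-- The transpose of an isomorphism of zigzag modules. -/
noncomputable def dual (f : ZigzagIso V W) : ZigzagIso (dualModule W) (dualModule V) where
  e i := (f.e i).dualMap
  comm_fwd i h := fun φ : Module.Dual k (W.V i) => LinearMap.ext fun x =>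
    congrArg φ (f.comm_bwd i (by simpa using h) x).symm
  comm_bwd i h := fun φ : Module.Dual k (W.V (i + 1)) => LinearMap.ext fun x =>
    congrArg φ (f.comm_fwd i (by simpa using h) x).symm

/-- Functoriality of `M ⊗ₖ V` in the zigzag module `V`. -/
noncomputable def lTensor (M : Type) [AddCommGroup M] [Module k M] (f : ZigzagIso V W) :
    ZigzagIso (tensorModule M V) (tensorModule M W) where
  e i := (f.e i).lTensor M
  comm_fwd i h := lTensor_apply_lTensor_of_comp_eq (LinearMap.ext (f.comm_fwd i h))
  comm_bwd i h := lTensor_apply_lTensor_of_comp_eq (LinearMap.ext (f.comm_bwd i h))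

/-- The direct sum of a family of isomorphisms of zigzag modules. -/
noncomputable def dsumCongr {I : Type} [DecidableEq I] {F G : I → ZigzagModule k d}
    (f : ∀ j, ZigzagIso (F j) (G j)) : ZigzagIso (dsumModule k d I F) (dsumModule k d I G) where
  e i := DirectSum.congrLinearEquiv fun j => (f j).e i
  comm_fwd i h := fun x : DirectSum I fun j => (F j).V i => by
    rw [dsumModule_fwd, dsumModule_fwd]
    exact DFinsupp.ext fun j => (f j).comm_fwd i h (x j)
  comm_bwd i h := fun x : DirectSum I fun j => (F j).V (i + 1) => by
    rw [dsumModule_bwd, dsumModule_bwd]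
    exact DFinsupp.ext fun j => (f j).comm_bwd i h (x j)

/-- The dual of a finite direct sum of zigzag modules is the direct sum of their duals. -/
noncomputable def dualDsum {I : Type} [DecidableEq I] [Fintype I] (F : I → ZigzagModule k d) :
    ZigzagIso (dualModule (dsumModule k d I F))
      (dsumModule k (fun i => !(d i)) I fun j => dualModule (F j)) where
  e i := dualDirectSumEquiv fun j => (F j).V i
  comm_fwd i h φ := by
    rw [dsumModule_fwd]
    simp only [dualModule, dsumModule_bwd]
    exact dualDirectSumEquiv_dualMap_lmap _ φ
  comm_bwd i h φ := by
    rw [dsumModule_bwd]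
    simp only [dualModule, dsumModule_fwd]
    exact dualDirectSumEquiv_dualMap_lmap _ φ

/-- For a pointwise finite-dimensional zigzag module `V` and an arbitrary vector space `M`, the
canonical isomorphism `M* ⊗ₖ V* ≅ (M ⊗ₖ V)*`. -/
noncomputable def tensorDual (M : Type) [AddCommGroup M] [Module k M] (V : ZigzagModule k d)
    [∀ i, FiniteDimensional k (V.V i)] :
    ZigzagIso (tensorModule (Module.Dual k M) (dualModule V)) (dualModule (tensorModule M V)) where
  e i := LinearEquiv.ofBijective _ (dualDistrib_bijective k M (V.V i))
  comm_fwd i h := dualDistrib_lTensor_dualMap (V.bwd i (by simpa using h))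
  comm_bwd i h := dualDistrib_lTensor_dualMap (V.fwd i (by simpa using h))

/-- The interval module of the reversed shape is the dual of the interval module supported on the
same interval. -/
noncomputable def intervalDual (k : Type) [Field k] (d : ℕ → Bool) (p q : ℕ) :
    ZigzagIso (intervalModule k (fun i => !(d i)) p q) (dualModule (intervalModule k d p q)) where
  e i := subspaceSelfDual (intervalSpace k p q i)
  comm_fwd _ _ := subspaceSelfDual_intervalMap
  comm_bwd _ _ := subspaceSelfDual_intervalMap

/-- The isomorphism `(M ⊗ₖ I[p,q])* ≅ M* ⊗ₖ I'[p,q]`, with `I'[p,q]` of the reversed shape. -/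
noncomputable def dualTensorInterval (d : ℕ → Bool) (M : Type) [AddCommGroup M] [Module k M]
    (p q : ℕ) :
    ZigzagIso (dualModule (tensorModule M (intervalModule k d p q)))
      (tensorModule (Module.Dual k M) (intervalModule k (fun i => !(d i)) p q)) :=
  have (i : ℕ) : FiniteDimensional k ((intervalModule k d p q).V i) :=
    inferInstanceAs (FiniteDimensional k (intervalSpace k p q i))
  (((intervalDual k d p q).lTensor (Module.Dual k M)).trans (tensorDual M _)).symm

end ZigzagIso

theorem dual_interval_decomposition_general {k : Type} [Field k] {d : ℕ → Bool}
    {V : ZigzagModule k d} {I : Type} [DecidableEq I] [Finite I] (p q : I → ℕ) (M : I → Type)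
    [∀ j, AddCommGroup (M j)] [∀ j, Module k (M j)]
    (hiso : Nonempty (ZigzagIso V
      (dsumModule k d I fun j => tensorModule (M j) (intervalModule k d (p j) (q j))))) :
    Nonempty (ZigzagIso (dualModule V)
      (dsumModule k (fun i => !(d i)) I fun j =>
        tensorModule (Module.Dual k (M j)) (intervalModule k (fun i => !(d i)) (p j) (q j)))) := by
  obtain ⟨f⟩ := hiso
  have := Fintype.ofFinite I
  have dualSummands := ZigzagIso.dsumCongr fun j =>
    ZigzagIso.dualTensorInterval (k := k) d (M j) (p j) (q j)
  exact ⟨f.symm.dual.trans ((ZigzagIso.dualDsum _).trans dualSummands)⟩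

theorem finite_intervals_below (n : ℕ) :
    Finite {pq : ℕ × ℕ // pq.1 ≤ pq.2 ∧ pq.2 < n} :=
  ((Set.finite_Iio n).prod (Set.finite_Iio n)).subset
    (fun _ h => ⟨h.1.trans_lt h.2, h.2⟩) |>.to_subtype

/-- **Duality of interval decompositions of zigzag modules.**
If a zigzag module `V` of shape `d` decomposes as
`V ≅ ⊕_{p ≤ q < n} M_{p,q} ⊗ I[p,q]`, then its dual `V*` (of the reversed
shape) decomposes as `V* ≅ ⊕_{p ≤ q < n} (M_{p,q})* ⊗ I'[p,q]`, where
`I'[p,q]` is the interval module of the reversed shape supported on the same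
interval. -/
theorem dual_interval_decomposition
    (k : Type) [Field k] (n : ℕ) (hn : 1 ≤ n) (d : ℕ → Bool)
    (V : ZigzagModule k d)
    (M : ℕ → ℕ → Type)
    [∀ p q, AddCommGroup (M p q)] [∀ p q, Module k (M p q)]
    (hiso : Nonempty (ZigzagIso V
      (dsumModule k d {pq : ℕ × ℕ // pq.1 ≤ pq.2 ∧ pq.2 < n}
        (fun j => tensorModule (M j.1.1 j.1.2)
          (intervalModule k d j.1.1 j.1.2))))) :
    Nonempty (ZigzagIso (dualModule V)
      (dsumModule k (fun i => !(d i)) {pq : ℕ × ℕ // pq.1 ≤ pq.2 ∧ pq.2 < n}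
        (fun j => tensorModule (Module.Dual k (M j.1.1 j.1.2))
          (intervalModule k (fun i => !(d i)) j.1.1 j.1.2)))) := by
  have := finite_intervals_below n
  exact dual_interval_decomposition_general (I := {pq : ℕ × ℕ // pq.1 ≤ pq.2 ∧ pq.2 < n})
    (·.1.1) (·.1.2) (fun j => M j.1.1 j.1.2) hiso
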